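/- Let α ≤ β ≤ −1 be negative integers, let M = (M_i)_{i≥0} be real parameters with M_i ∉ {0,1}, and let F be a finite set of positive integers with {−β, …, −α−β−1} ⊆ F. Write λ^{α,β}(v) = v(v+α+β+1). Then for every n ∈ σ_F, the exceptional Jacobi polynomial P_n^{α,β;M,F} satisfies the second order differential equation (1−x²)·(P_n^{α,β;M,F})''(x) + h_1(x)·(P_n^{α,β;M,F})'(x) + h_0(x)·P_n^{α,β;M,F}(x) = −λ^{α,β}(n−u_F)·P_n^{α,β;M,F}(x) at every x with Ω_{M,F}^{α,β}(x) ≠ 0, where h_1(x) = β−α − (α+β+2n_F+2)x − 2(1−x²)·(Ω_{M,F}^{α,β})'(x)/Ω_{M,F}^{α,β}(x) and h_0(x) = −λ^{α,β}(n_F) + [α−β+(2n_F+α+β)x]·(Ω_{M,F}^{α,β})'(x)/Ω_{M,F}^{α,β}(x) + (1−x²)·(Ω_{M,F}^{α,β})''(x)/Ω_{M,F}^{α,β}(x). -/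

import Mathlib

open Finset MeasureTheory

noncomputable section ExceptionalHahnJacobi

/-- Pochhammer symbol `(z)_m = z (z+1) ⋯ (z+m-1)`. -/
def poch (z : ℝ) (m : ℕ) : ℝ := ∏ i ∈ Finset.range m, (z + (i : ℝ))

/-- Pochhammer symbol with integer exponent; `(z)_{-k} = 1 / ((z-1)(z-2)⋯(z-k))`. -/
def pochZ (z : ℝ) (m : ℤ) : ℝ :=
  if 0 ≤ m then poch z m.toNat else 1 / poch (z - ((-m).toNat : ℝ)) (-m).toNat

/-- Generalized binomial coefficient `C(z, k) = z(z-1)⋯(z-k+1)/k!`. -/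
def genBinom (z : ℝ) (k : ℕ) : ℝ := (∏ i ∈ Finset.range k, (z - (i : ℝ))) / (k.factorial : ℝ)

/-- `λ^{a,b}(x) = x (x + a + b + 1)`. -/
def lam (a b x : ℝ) : ℝ := x * (x + a + b + 1)

/-- Hahn polynomial `h_n^{a,b,N}(x)`. -/
def hahn (a b N : ℝ) (n : ℕ) (x : ℝ) : ℝ :=
  ∑ j ∈ Finset.range (n + 1),
    poch (-(n : ℝ)) j * poch (a + b + (n : ℝ) + 1) j * poch (-N + (j : ℝ)) (n - j) *
      poch (a + (j : ℝ) + 1) (n - j) * poch (-x) j / (j.factorial : ℝ)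

/-- Dual Hahn polynomial `R_n^{a,b,N}(x)`. -/
def dualHahn (a b N : ℝ) (n : ℕ) (x : ℝ) : ℝ :=
  ∑ j ∈ Finset.range (n + 1),
    poch (-(n : ℝ)) j * poch (-N + (j : ℝ)) (n - j) * poch (a + (j : ℝ) + 1) (n - j) /
        ((n.factorial : ℝ) * (-1 : ℝ) ^ j * (j.factorial : ℝ)) *
      ∏ i ∈ Finset.range j, (x - (i : ℝ) * (a + b + 1 + (i : ℝ)))

/-- Dual Hahn polynomial with integer degree; zero for negative degree. -/
def dualHahnZ (a b N : ℝ) (m : ℤ) (x : ℝ) : ℝ :=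
  if 0 ≤ m then dualHahn a b N m.toNat x else 0

/-- Jacobi polynomial `P_n^{a,b}(x)`. -/
def jacobiP (a b : ℝ) (n : ℕ) (x : ℝ) : ℝ :=
  (2 : ℝ)⁻¹ ^ n * ∑ j ∈ Finset.range (n + 1),
    genBinom ((n : ℝ) + a) j * genBinom ((n : ℝ) + b) (n - j) * (x - 1) ^ (n - j) * (x + 1) ^ j

/-- The function `φ_u^{α,β,N}(s,x)`, a normalized terminating ₃F₂. -/
def phiH (α β : ℤ) (N : ℝ) (u : ℕ) (s x : ℝ) : ℝ :=
  poch ((α : ℝ) + 1) (max u (-α - β - (u : ℤ) - 1).toNat) *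
    poch (-N) (max u (-α - β - (u : ℤ) - 1).toNat) *
    ∑ j ∈ Finset.range (u + 1),
      poch (-(u : ℝ)) j * poch ((u : ℝ) - s + (α : ℝ) + (β : ℝ) + 1) j * poch (-x) j /
        (poch ((α : ℝ) - s + 1) j * poch (-N) j * (j.factorial : ℝ))

/-- The polynomials `Ĥ_n^{α,β,N;M}(x)`. -/
def Hhat (α β : ℤ) (N : ℝ) (M : ℕ → ℝ) (n : ℕ) (x : ℝ) : ℝ :=
  if ⌈((-α - β : ℤ) : ℚ) / 2⌉ ≤ (n : ℤ) ∧ (n : ℤ) ≤ -α - 1 then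
    deriv (fun s => phiH α β N n s x) 0 -
      deriv (fun s => phiH α β N (-α - β - (n : ℤ) - 1).toNat s x) 0
  else if -α ≤ (n : ℤ) ∧ (n : ℤ) ≤ -α - β - 1 then
    (-1 : ℝ) ^ ((β : ℤ) + (n : ℤ)) * ((β + (n : ℤ)).toNat.factorial : ℝ) *
      (((-α - β - (n : ℤ) - 1).toNat.factorial : ℝ) * poch (-x) (-α).toNat *
          hahn (-(α : ℝ)) (β : ℝ) ((α : ℝ) + N) ((α + (n : ℤ)).toNat) (x + (α : ℝ)) +
        (((α + (n : ℤ)).toNat.factorial : ℝ)) *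
            poch (-N - (α : ℝ) - (β : ℝ) - (n : ℝ) - 1) (2 * (n : ℤ) + α + β + 1).toNat /
            (M ((α + (n : ℤ)).toNat) - 1) *
          hahn (α : ℝ) (β : ℝ) N ((-α - β - (n : ℤ) - 1).toNat) x)
  else hahn (α : ℝ) (β : ℝ) N n x

/-- The function `φ_u^{α,β}(s,x)`, a normalized terminating ₂F₁. -/
def phiJ (α β : ℤ) (u : ℕ) (s x : ℝ) : ℝ :=
  poch ((α : ℝ) + 1) (max u (-α - β - (u : ℤ) - 1).toNat) /
      ((max u.factorial (-α - β - (u : ℤ) - 1).toNat.factorial : ℕ) : ℝ) *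
    ∑ j ∈ Finset.range (u + 1),
      poch (-(u : ℝ)) j * poch ((u : ℝ) - s + (α : ℝ) + (β : ℝ) + 1) j /
          (poch ((α : ℝ) - s + 1) j * (j.factorial : ℝ)) * ((1 - x) / 2) ^ j

/-- The polynomials `P̂_n^{α,β;M}(x)`. -/
def Phat (α β : ℤ) (M : ℕ → ℝ) (n : ℕ) (x : ℝ) : ℝ :=
  if ⌈((-α - β : ℤ) : ℚ) / 2⌉ ≤ (n : ℤ) ∧ (n : ℤ) ≤ -α - 1 then
    deriv (fun s => phiJ α β n s x) 0 -
      deriv (fun s => phiJ α β (-α - β - (n : ℤ) - 1).toNat s x) 0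
  else if -α ≤ (n : ℤ) ∧ (n : ℤ) ≤ -α - β - 1 then
    (-1 : ℝ) ^ ((β : ℤ) + (n : ℤ)) *
      ((((n : ℤ) + α).toNat.factorial : ℝ) * (((n : ℤ) + β).toNat.factorial : ℝ) *
        ((-α - β - (n : ℤ) - 1).toNat.factorial : ℝ)) / (n.factorial : ℝ) *
      ((M ((α + (n : ℤ)).toNat) - 1)⁻¹ * jacobiP (α : ℝ) (β : ℝ) ((-α - β - (n : ℤ) - 1).toNat) x +
        ((1 - x) / 2) ^ (-α).toNat * jacobiP (-(α : ℝ)) (β : ℝ) ((α + (n : ℤ)).toNat) x)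
  else jacobiP (α : ℝ) (β : ℝ) n x

/-- `u_F = Σ_{f ∈ F} f - C(n_F + 1, 2)`. -/
def uF (F : Finset ℕ) : ℕ := (∑ f ∈ F, f) - (F.card + 1).choose 2

/-- `n ∈ σ_F = {u_F, u_F + 1, …} \ {u_F + f : f ∈ F}`. -/
def inSigma (F : Finset ℕ) (n : ℕ) : Prop := uF F ≤ n ∧ n - uF F ∉ F

/-- The `i`-th element of `F` in increasing order. -/
def elemOf (F : Finset ℕ) (i : Fin F.card) : ℕ := ((F.orderIsoOfFin rfl i : {x // x ∈ F}) : ℕ)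

/-- The `i`-th element of a finite set of integers, in increasing order. -/
def elemOfZ (S : Finset ℤ) (i : Fin S.card) : ℤ := ((S.orderIsoOfFin rfl i : {x // x ∈ S}) : ℤ)

/-- Exceptional Hahn polynomial `h_n^{α,β,N;M,F}(x)`. -/
def exHahn (α β : ℤ) (N : ℝ) (M : ℕ → ℝ) (F : Finset ℕ) (n : ℕ) (x : ℝ) : ℝ :=
  Matrix.det (Matrix.of fun i j : Fin (F.card + 1) =>
    Fin.cases (Hhat α β N M (n - uF F) (x + ((j : ℕ) : ℝ)))
      (fun k => Hhat α β N M (elemOf F k) (x + ((j : ℕ) : ℝ))) i)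

/-- The polynomial `Ω_{M,F}^{α,β,N}(x)`. -/
def OmegaH (α β : ℤ) (N : ℝ) (M : ℕ → ℝ) (F : Finset ℕ) (x : ℝ) : ℝ :=
  Matrix.det (Matrix.of fun i j : Fin F.card =>
    Hhat α β N M (elemOf F i) (x + ((j : ℕ) : ℝ)))

/-- The polynomial `Λ_{M,F}^{α,β,N}(x)` (columns `j ∈ {1,…,n_F+1}`, `j ≠ n_F`). -/
def LambdaH (α β : ℤ) (N : ℝ) (M : ℕ → ℝ) (F : Finset ℕ) (x : ℝ) : ℝ :=
  Matrix.det (Matrix.of fun i j : Fin F.card =>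
    Hhat α β N M (elemOf F i)
      (x + ((if (j : ℕ) = F.card - 1 then F.card else (j : ℕ) : ℕ) : ℝ)))

/-- Exceptional Jacobi polynomial `P_n^{α,β;M,F}(x)`. -/
def exJacobi (α β : ℤ) (M : ℕ → ℝ) (F : Finset ℕ) (n : ℕ) (x : ℝ) : ℝ :=
  Matrix.det (Matrix.of fun i j : Fin (F.card + 1) =>
    Fin.cases (iteratedDeriv (j : ℕ) (Phat α β M (n - uF F)) x)
      (fun k => iteratedDeriv (j : ℕ) (Phat α β M (elemOf F k)) x) i)

/-- The polynomial `Ω_{M,F}^{α,β}(x)`. -/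
def OmegaJ (α β : ℤ) (M : ℕ → ℝ) (F : Finset ℕ) (x : ℝ) : ℝ :=
  Matrix.det (Matrix.of fun i j : Fin F.card =>
    iteratedDeriv (j : ℕ) (Phat α β M (elemOf F i)) x)

/-- `F_ext = F \ {-β, …, -α-β-1}`. -/
def Fext (α β : ℤ) (F : Finset ℕ) : Finset ℕ :=
  F.filter fun f : ℕ => ((f : ℤ) < -β ∨ -α - β ≤ (f : ℤ))

/-- Admissibility of the data `α, β, M, F`. -/
def IsAdmissible (α β : ℤ) (M : ℕ → ℝ) (F : Finset ℕ) : Prop :=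
  (∀ i : ℕ, (i : ℤ) ≤ -β - 1 → (∀ f ∈ F, (i : ℤ) ≠ -β - (f : ℤ) - 1) →
      Real.sign (M i) =
        Real.sign (∏ f ∈ Fext α β F, (((i : ℝ) - (f : ℝ) - (α : ℝ)) * ((i : ℝ) + (f : ℝ) + (β : ℝ) + 1)))) ∧
  (∀ x : ℤ, 0 ≤ x → (∃ f ∈ F, x ≤ (f : ℤ) + α + β) →
      0 ≤ ∏ f ∈ F.filter (fun f : ℕ => -α - β ≤ (f : ℤ)), (x - (f : ℤ) - α - β))

/-- `U_{F-} = {f + α + β : f ∈ F, 1 ≤ f ≤ -β-1}`. -/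
def UFm (α β : ℤ) (F : Finset ℕ) : Finset ℤ :=
  (F.filter fun f : ℕ => (1 ≤ f ∧ (f : ℤ) ≤ -β - 1)).image fun f : ℕ => (f : ℤ) + α + β

/-- `U_{F+} = {f + α + β : f ∈ F, f ≥ -α-β}`. -/
def UFp (α β : ℤ) (F : Finset ℕ) : Finset ℤ :=
  (F.filter fun f : ℕ => -α - β ≤ (f : ℤ)).image fun f : ℕ => (f : ℤ) + α + β

/-- `U_F = U_{F-} ∪ U_{F+}`. -/
def UF (α β : ℤ) (F : Finset ℕ) : Finset ℤ := UFm α β F ∪ UFp α β F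

/-- The weight of the measure `ω_{α,β,N}^{M,F}` at the point `x`. -/
def wH (α β : ℤ) (N : ℕ) (M : ℕ → ℝ) (F : Finset ℕ) (x : ℕ) : ℝ :=
  genBinom ((α : ℝ) + (F.card : ℝ) + (x : ℝ)) x *
      genBinom ((β : ℝ) + (N : ℝ) - (x : ℝ)) (N - F.card - x) /
    (OmegaH α β (N : ℝ) M F (x : ℝ) * OmegaH α β (N : ℝ) M F ((x : ℝ) + 1))

/-- The weight `ω_{α,β;M,F}(x)` on `[-1,1]`. -/
def wJ (α β : ℤ) (M : ℕ → ℝ) (F : Finset ℕ) (x : ℝ) : ℝ :=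
  (1 - x) ^ (α + (F.card : ℤ)) * (1 + x) ^ (β + (F.card : ℤ)) / (OmegaJ α β M F x) ^ 2

/-- The measure on `[-1,1]` with density `ω_{α,β;M,F}`. -/
def jacobiMeasure (α β : ℤ) (M : ℕ → ℝ) (F : Finset ℕ) : Measure ℝ :=
  (volume.restrict (Set.Icc (-1 : ℝ) 1)).withDensity fun x => ENNReal.ofReal (wJ α β M F x)

/-- Mass of the dual Hahn measure `ρ_{b,a,N̂}` at `λ^{a,b}(x)`. -/
def rhoMass (a b Nh : ℤ) (x : ℕ) : ℝ :=
  (2 * (x : ℝ) + (a : ℝ) + (b : ℝ) + 1) * poch ((b : ℝ) + 1) x * poch (-(Nh : ℝ)) x *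
      (Nh.toNat.factorial : ℝ) /
    ((-1 : ℝ) ^ x * poch ((x : ℝ) + (a : ℝ) + (b : ℝ) + 1) (Nh + 1).toNat *
      poch ((a : ℝ) + 1) x * (x.factorial : ℝ))

/-- Mass of the measure `ν_{a,b,N̂}^{M}` at `λ^{a,b}(s)`. -/
def nuMass (a b Nh : ℤ) (M : ℕ → ℝ) (s : ℤ) : ℝ :=
  if -b ≤ s ∧ s ≤ -1 then
    (2 * (s : ℝ) + (a : ℝ) + (b : ℝ) + 1) * poch ((Nh : ℝ) + 1 - (s : ℝ)) (s + b).toNat /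
        poch ((Nh : ℝ) + (b : ℝ) + 1) (s + a + 1).toNat * M ((s + b).toNat)
  else if 0 ≤ s ∧ s ≤ Nh then
    poch ((Nh : ℝ) + 1) b.toNat ^ 2 / poch ((b : ℝ) + 1) (a - b).toNat * rhoMass a b Nh s.toNat /
      ∏ i ∈ Finset.range b.toNat, (((s : ℝ) + (a : ℝ) + (i : ℝ) + 1) * ((s : ℝ) + (b : ℝ) - (i : ℝ)))
  else 0

/-- `ζ_v` (defined for any integer `v` via `pochZ`). -/
def zetaH (α β : ℤ) (N : ℝ) (v : ℤ) : ℝ :=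
  pochZ (-N - (α : ℝ) - (β : ℝ)) v * poch ((v : ℝ) + 1) (-α).toNat *
    ((v - α - β).toNat.factorial : ℝ)

/-- `θ_v^M`. -/
def thetaM (β : ℤ) (M : ℕ → ℝ) (v : ℕ) : ℝ :=
  if (v : ℤ) ≤ -β - 1 then 1 - M ((-β - 1 - (v : ℤ)).toNat) else 1

/-- `τ_v = ∏_{u ∈ U_F} (λ^{a,b}(v+α+β) - λ^{a,b}(u))` with `a = -α`, `b = -β`. -/
def tauH (α β : ℤ) (F : Finset ℕ) (v : ℕ) : ℝ :=
  ∏ u ∈ UF α β F,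
    (lam ((-α : ℤ) : ℝ) ((-β : ℤ) : ℝ) ((v : ℝ) + (α : ℝ) + (β : ℝ)) -
      lam ((-α : ℤ) : ℝ) ((-β : ℤ) : ℝ) ((u : ℤ) : ℝ))

/-- `ξ_n`. -/
def xiH (α β : ℤ) (N : ℝ) (F : Finset ℕ) (n : ℕ) : ℝ :=
  pochZ (N - (n : ℝ) + 1) ((n : ℤ) + α + β) ^ (α + (F.card : ℤ) + 1) *
    ∏ j ∈ Finset.range (F.card + 1), poch (N - (n : ℝ) - (j : ℝ) + 1) j

/-- `κ_M`. -/
def kappaM (α β : ℤ) (N : ℝ) (M : ℕ → ℝ) (F : Finset ℕ) : ℝ :=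
  (∏ u ∈ UFm α β F, (1 - M ((-u + α - 1).toNat))) * ∏ u ∈ UF α β F, zetaH α β N u

/-- Entry `(i,j)` (0-based) of the determinant defining `q_n^{a,b,N̂;M,U_F}`. -/
def qEntry (α β : ℤ) (N : ℝ) (M : ℕ → ℝ) (F : Finset ℕ) (n : ℕ) (x : ℝ) (i j : ℕ) : ℝ :=
  if i = 0 then
    (-1 : ℝ) ^ j * dualHahnZ (((-α).toNat : ℝ)) (((-β).toNat : ℝ)) (N + (α : ℝ) + (β : ℝ))
      ((n : ℤ) - (-α).toNat + j) x
  else if h1 : i - 1 < (UFm α β F).card then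
    (-1 : ℝ) ^ j * dualHahnZ (((-α).toNat : ℝ)) (((-β).toNat : ℝ)) (N + (α : ℝ) + (β : ℝ))
      ((n : ℤ) - (-α).toNat + j)
      (lam (((-α).toNat : ℝ)) (((-β).toNat : ℝ)) ((elemOfZ (UFm α β F) ⟨i - 1, h1⟩ : ℤ) : ℝ))
  else if i - 1 - (UFm α β F).card < (-α).toNat then
    poch (((-α).toNat : ℝ) + ((-β).toNat : ℝ) + (N + (α : ℝ) + (β : ℝ)) - (n : ℝ) - (j : ℝ) + 1) j *
      Hhat α β (-2 - (N + (α : ℝ) + (β : ℝ))) M ((-β).toNat + (i - 1 - (UFm α β F).card))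
        (-(n : ℝ) + ((-α).toNat : ℝ) - (j : ℝ) - 1)
  else if h3 : i - 1 - (UFm α β F).card - (-α).toNat < (UFp α β F).card then
    (-1 : ℝ) ^ j * dualHahnZ (((-α).toNat : ℝ)) (((-β).toNat : ℝ)) (N + (α : ℝ) + (β : ℝ))
      ((n : ℤ) - (-α).toNat + j)
      (lam (((-α).toNat : ℝ)) (((-β).toNat : ℝ))
        ((elemOfZ (UFp α β F) ⟨i - 1 - (UFm α β F).card - (-α).toNat, h3⟩ : ℤ) : ℝ))
  else 0

/-- The Krall dual Hahn orthogonal polynomial `q_n^{a,b,N̂;M,U_F}(x)`. -/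
def qKrall (α β : ℤ) (N : ℝ) (M : ℕ → ℝ) (F : Finset ℕ) (n : ℕ) (x : ℝ) : ℝ :=
  Matrix.det (Matrix.of fun i j : Fin (1 + (UFm α β F).card + (-α).toNat + (UFp α β F).card) =>
      qEntry α β N M F n x (i : ℕ) (j : ℕ)) /
    ((-1 : ℝ) ^ ((n + (-α).toNat + (-β).toNat) * ((UF α β F).card + 1) +
        ((-α).toNat + (-β).toNat).choose 2 + ((-β).toNat).choose 2 + (-α).toNat) *
      ∏ u ∈ UF α β F, (x - lam (((-α).toNat : ℝ)) (((-β).toNat : ℝ)) ((u : ℤ) : ℝ)))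

/-- Row used in the renormalized determinant `P̄`: for `-α ≤ g ≤ -α-β-1` it is
`(M_{α+g} - 1) · P̂_g` written without the division by `M_{α+g} - 1`. -/
def PhatBarRow (α β : ℤ) (M : ℕ → ℝ) (g : ℕ) (x : ℝ) : ℝ :=
  if -α ≤ (g : ℤ) ∧ (g : ℤ) ≤ -α - β - 1 then
    (-1 : ℝ) ^ ((β : ℤ) + (g : ℤ)) *
      ((((g : ℤ) + α).toNat.factorial : ℝ) * (((g : ℤ) + β).toNat.factorial : ℝ) *
        ((-α - β - (g : ℤ) - 1).toNat.factorial : ℝ)) / (g.factorial : ℝ) *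
      (jacobiP (α : ℝ) (β : ℝ) ((-α - β - (g : ℤ) - 1).toNat) x +
        (M ((α + (g : ℤ)).toNat) - 1) * ((1 - x) / 2) ^ (-α).toNat *
          jacobiP (-(α : ℝ)) (β : ℝ) ((α + (g : ℤ)).toNat) x)
  else Phat α β M g x

/-- The renormalized exceptional Jacobi polynomial
`P̄_n^{α,β;M,F} = (∏_{i=0}^{-β-1} (M_i - 1)) · P_n^{α,β;M,F}`
(written so that the factors `M_i - 1` are distributed into the corresponding rows of the
determinant; this agrees with the product formula whenever all `M_i ≠ 1`). -/
def Pbar (α β : ℤ) (M : ℕ → ℝ) (F : Finset ℕ) (n : ℕ) (x : ℝ) : ℝ :=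
  (∏ i ∈ (Finset.range (-β).toNat).filter
      (fun i : ℕ => (((i : ℤ) - α).toNat ∉ F ∧ ((i : ℤ) - α).toNat ≠ n - uF F)), (M i - 1)) *
    Matrix.det (Matrix.of fun r j : Fin (F.card + 1) =>
      Fin.cases (iteratedDeriv (j : ℕ) (PhatBarRow α β M (n - uF F)) x)
        (fun k => iteratedDeriv (j : ℕ) (PhatBarRow α β M (elemOf F k)) x) r)

end ExceptionalHahnJacobi

/-!
Let `D` be the Jacobi operator `y ↦ (1 - x²) y'' + (β - α - (α + β + 2) x) y'`. The polynomials
`P̂_n` outside the range `-α - β ≤ 2 n ≤ -2 α - 2` are eigenfunctions of `D`; inside it,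
differentiating the hypergeometric equation in the parameter `s` shows that `D P̂_n + λ(n) P̂_n` is
a multiple of `P̂_{-α-β-n-1}`. As the index `-α - β - n - 1` lies in `F`, the span of the `P̂_f`,
`f ∈ F`, is invariant under `D`, and each `P̂_n` is an eigenfunction modulo this span.

For an invariant family with Wronskian `W`, sum over the rows the determinants in which one row is
replaced by its image under `D`. Row by row this is the trace of `D` times `W`; column by column it
is an expression in `W`, its derivatives and one generalized Wronskian. Comparing the two
identities for `Ω` and for the Wronskian with `P̂_n` adjoined, the traces differ by `-λ(n)`, and a
Plücker relation eliminates the generalized Wronskians.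
-/

section Determinant

variable {ι A : Type*} [Fintype ι] [DecidableEq ι] [CommRing A]

/- Both sides equal `∑ i j, B i j * adjugate M j i`. -/
theorem sum_det_updateRow_eq_sum_det_updateCol (M B : Matrix ι ι A) :
    ∑ i, (M.updateRow i (B i)).det = ∑ j, (M.updateCol j fun i => B i j).det := by
  have row (i : ι) : (M.updateRow i (B i)).det = ∑ j, M.adjugate j i * B i j := by
    rw [← Matrix.cramer_transpose_apply, Matrix.cramer_eq_adjugate_mulVec,
      ← Matrix.adjugate_transpose]
    rfl
  have col (j : ι) : (M.updateCol j fun i => B i j).det = ∑ i, M.adjugate j i * B i j := by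
    rw [← Matrix.cramer_apply, Matrix.cramer_eq_adjugate_mulVec]
    rfl
  simp only [row, col]
  exact Finset.sum_comm

theorem sum_det_updateRow_mul (M B : Matrix ι ι A) :
    ∑ i, (M.updateRow i ((B * M) i)).det = B.trace * M.det := by
  have row (i : ι) : (B * M) i = ∑ l, B i l • M l := by
    ext j
    simp [Matrix.mul_apply]
  simp only [row, Matrix.det_updateRow_sum, smul_eq_mul, Matrix.trace, Matrix.diag_apply,
    Finset.sum_mul]

end Determinant

section Derivation

variable {ι R A : Type*} [CommRing R] [CommRing A] [Algebra R A] (d : Derivation R A A)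

theorem derivation_prod [DecidableEq ι] (s : Finset ι) (f : ι → A) :
    d (∏ i ∈ s, f i) = ∑ i ∈ s, (∏ j ∈ s.erase i, f j) * d (f i) := by
  induction s using Finset.induction_on with
  | empty => simp
  | insert a s ha ih =>
    have erase_insert (i : ι) (hi : i ∈ s) :
        ∏ j ∈ (insert a s).erase i, f j = f a * ∏ j ∈ s.erase i, f j := by
      rw [Finset.erase_insert_of_ne (ne_of_mem_of_not_mem hi ha).symm,
        Finset.prod_insert fun h => ha (Finset.mem_of_mem_erase h)]
    rw [Finset.prod_insert ha, d.leibniz, ih, Finset.sum_insert ha, Finset.erase_insert ha,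
      smul_eq_mul, smul_eq_mul, Finset.mul_sum, add_comm]
    congr 1
    exact Finset.sum_congr rfl fun i hi => by rw [erase_insert i hi, mul_assoc]

theorem derivation_det [Fintype ι] [DecidableEq ι] (M : Matrix ι ι A) :
    d M.det = ∑ j, (M.updateCol j fun i => d (M i j)).det := by
  simp only [Matrix.det_apply, map_sum, Units.smul_def, map_zsmul, derivation_prod d]
  rw [Finset.sum_comm]
  refine Finset.sum_congr rfl fun τ _ => ?_
  rw [← Finset.smul_sum]
  congr 1
  refine Finset.sum_congr rfl fun j _ => ?_
  rw [← Finset.prod_erase_mul _ _ (Finset.mem_univ j), Matrix.updateCol_self]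
  congr 1
  exact Finset.prod_congr rfl fun i hi => by rw [Matrix.updateCol_ne (Finset.ne_of_mem_erase hi)]

theorem derivation_iterate_sum_smul [Fintype ι] (n : ℕ) (c : ι → R) (f : ι → A) :
    d^[n] (∑ i, c i • f i) = ∑ i, c i • d^[n] (f i) := by
  induction n with
  | zero => rfl
  | succ n ih => simp only [Function.iterate_succ_apply', ih, map_sum, Derivation.map_smul]

/-- The second order differential operator `y ↦ p * d (d y) + q * d y`. -/
def secondOrderOp (p q : A) : A →ₗ[R] A :=
  p • ((d : A →ₗ[R] A) ∘ₗ (d : A →ₗ[R] A)) + q • (d : A →ₗ[R] A)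

theorem secondOrderOp_apply (p q y : A) :
    secondOrderOp d p q y = p * d (d y) + q * d y := rfl

theorem iterate_secondOrderOp {p q : A} (hp : d (d (d p)) = 0) (hq : d (d q) = 0) (y : A)
    (n : ℕ) :
    d^[n] (secondOrderOp d p q y) =
      p * d^[n + 2] y + (n * d p + q) * d^[n + 1] y +
        (n.choose 2 * d (d p) + n * d q) * d^[n] y := by
  induction n with
  | zero => simp [secondOrderOp_apply]
  | succ n ih =>
    have choose_succ : (n + 1).choose 2 = n + n.choose 2 := by
      rw [Nat.choose_succ_succ', Nat.choose_one_right]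
    rw [Function.iterate_succ_apply', ih, choose_succ]
    simp only [Function.iterate_succ_apply', map_add, Derivation.leibniz, smul_eq_mul,
      Derivation.map_natCast, hp, hq]
    push_cast
    ring

end Derivation

section Wronskian

variable {R A : Type*} [CommRing R] [CommRing A] [Algebra R A] (d : Derivation R A A) {k m : ℕ}

/-- The matrix whose rows are indexed by the family `f` and whose `j`-th column holds the
derivatives of order `σ j`. Orders are a function on `ℕ` of which only the first `k` values
matter, so that they can be modified without reference to `Fin k`. -/
def wronskianMatrix (f : Fin k → A) (σ : ℕ → ℕ) : Matrix (Fin k) (Fin k) A :=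
  Matrix.of fun i j => d^[σ j] (f i)

/-- The generalized Wronskian of the family `f` with derivatives of orders `σ 0, σ 1, …`; the
ordinary Wronskian is the case `σ = id`. -/
def genWronskian (f : Fin k → A) (σ : ℕ → ℕ) : A :=
  (wronskianMatrix d f σ).det

variable (f : Fin k → A) (σ : ℕ → ℕ)

theorem wronskianMatrix_updateCol (j : Fin k) (s : ℕ) :
    (wronskianMatrix d f σ).updateCol j (fun i => d^[s] (f i)) =
      wronskianMatrix d f (Function.update σ j s) := by
  ext i l
  rcases eq_or_ne l j with rfl | hlj
  · simp [wronskianMatrix]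
  · simp [wronskianMatrix, hlj, Fin.val_ne_of_ne hlj]

theorem genWronskian_congr {τ : ℕ → ℕ} (h : ∀ j < k, σ j = τ j) :
    genWronskian d f σ = genWronskian d f τ := by
  simp only [genWronskian, wronskianMatrix, fun j : Fin k => h j j.isLt]

theorem genWronskian_update_eq_zero {j l : ℕ} (hj : j < k) (hl : l < k) (hjl : j ≠ l) :
    genWronskian d f (Function.update σ j (σ l)) = 0 := by
  refine Matrix.det_zero_of_column_eq (i := ⟨j, hj⟩) (j := ⟨l, hl⟩) (by simpa using hjl) fun i => ?_
  simp [wronskianMatrix, hjl.symm]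

theorem genWronskian_comp_swap {i j : ℕ} (hi : i < k) (hj : j < k) (hij : i ≠ j) :
    genWronskian d f (σ ∘ Equiv.swap i j) = -genWronskian d f σ := by
  have permuted : wronskianMatrix d f (σ ∘ Equiv.swap i j) =
      (wronskianMatrix d f σ).submatrix id (Equiv.swap (⟨i, hi⟩ : Fin k) ⟨j, hj⟩) := by
    ext a b
    simp [wronskianMatrix, Fin.val_injective.map_swap]
  rw [genWronskian, permuted, Matrix.det_permute', Equiv.Perm.sign_swap (by simpa using hij)]
  simp [genWronskian]

theorem derivation_genWronskian :
    d (genWronskian d f σ) =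
      ∑ j ∈ range k, genWronskian d f (Function.update σ j (σ j + 1)) := by
  rw [genWronskian, derivation_det,
    ← Fin.sum_univ_eq_sum_range fun j => genWronskian d f (Function.update σ j (σ j + 1))]
  refine Finset.sum_congr rfl fun j _ => ?_
  rw [genWronskian, ← wronskianMatrix_updateCol]
  simp [wronskianMatrix, Function.iterate_succ_apply']

theorem sum_mul_genWronskian_update_succ (f : Fin (m + 1) → A) (c : ℕ → A) :
    ∑ j ∈ range (m + 1), c j * genWronskian d f (Function.update id j (j + 1)) =
      c m * genWronskian d f (Function.update id m (m + 1)) := by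
  rw [sum_range_succ, sum_eq_zero, zero_add]
  intro j hj
  have hj : j < m := mem_range.1 hj
  have repeated_column : genWronskian d f (Function.update id j (j + 1)) = 0 :=
    genWronskian_update_eq_zero d f id (l := j + 1) (by omega) (by omega) (by omega)
  rw [repeated_column, mul_zero]

theorem derivation_wronskian (f : Fin (m + 1) → A) :
    d (genWronskian d f id) = genWronskian d f (Function.update id m (m + 1)) := by
  simpa [derivation_genWronskian] using sum_mul_genWronskian_update_succ d f 1

theorem derivation_derivation_wronskian (f : Fin (m + 2) → A) :
    d (d (genWronskian d f id)) =
      genWronskian d f (Function.update id (m + 1) (m + 3)) +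
        genWronskian d f (Function.update (Function.update id (m + 1) (m + 2)) m (m + 1)) := by
  rw [derivation_wronskian, derivation_genWronskian, sum_range_succ, sum_range_succ, sum_eq_zero]
  · simp only [Function.update_self, Function.update_idem, zero_add, id_eq, ne_eq,
      not_false_eq_true, Function.update_of_ne, Nat.lt_succ_self, ne_of_lt]
    exact add_comm _ _
  · intro j hj
    have hj : j < m := mem_range.1 hj
    have repeated_column := genWronskian_update_eq_zero d f
      (Function.update id (m + 1) (m + 2)) (j := j) (l := j + 1) (by omega) (by omega) (by omega)
    simpa [show j ≠ m + 1 by omega, show j ≠ m by omega] using repeated_column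

theorem sum_genWronskian_update_add_two (f : Fin (m + 1) → A) :
    ∑ j ∈ range (m + 1), genWronskian d f (Function.update id j (j + 2)) =
      2 * genWronskian d f (Function.update id m (m + 2)) - d (d (genWronskian d f id)) := by
  cases m with
  | zero =>
    rw [derivation_wronskian, derivation_genWronskian]
    simp [two_mul]
  | succ m =>
    have swapped : genWronskian d f (Function.update id m (m + 2)) =
        -genWronskian d f (Function.update (Function.update id (m + 1) (m + 2)) m (m + 1)) := by
      rw [← genWronskian_comp_swap d f _ (i := m) (j := m + 1) (by omega) (by omega) (by omega)]
      congr 1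
      ext l
      simp only [Function.comp_apply, Function.update_apply, Equiv.swap_apply_def, id_eq]
      split_ifs <;> omega
    have repeated_column (j : ℕ) (hj : j ∈ range m) :
        genWronskian d f (Function.update id j (j + 2)) = 0 := by
      have hj : j < m := mem_range.1 hj
      exact genWronskian_update_eq_zero d f id (l := j + 2) (by omega) (by omega) (by omega)
    rw [derivation_derivation_wronskian, sum_range_succ, sum_range_succ,
      sum_eq_zero repeated_column, swapped]
    ring

theorem genWronskian_skip (f : Fin (m + 2) → A) :
    genWronskian d f (fun j => if j < m then j else j + 1) =
      genWronskian d f (Function.update (Function.update id (m + 1) (m + 2)) m (m + 1)) :=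
  genWronskian_congr d f _ fun j _ => by
    simp only [Function.update_apply, id_eq]
    split_ifs <;> omega

theorem genWronskian_skip_add_one (f : Fin (m + 2) → A) :
    genWronskian d f (fun j => if j < m + 1 then j else j + 1) = d (genWronskian d f id) := by
  rw [derivation_wronskian]
  refine genWronskian_congr d f _ fun j _ => ?_
  simp only [Function.update_apply, id_eq]
  split_ifs <;> omega

theorem genWronskian_skip_add_two (f : Fin (m + 2) → A) :
    genWronskian d f (fun j => if j < m + 2 then j else j + 1) = genWronskian d f id :=
  genWronskian_congr d f _ fun j hj => by simp [hj]

/- The coefficients `genWronskian d f (update id m r)` are linear combinations of the rows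
`(d^[r] (f i))_r`, so the bordered determinant of which this is the first-row expansion vanishes. -/
theorem sum_neg_one_pow_mul_genWronskian_mul_genWronskian_cons (g : A) (f : Fin (m + 1) → A) :
    ∑ r : Fin (m + 3), (-1) ^ (r : ℕ) * genWronskian d f (Function.update id m r) *
      genWronskian d (Fin.cons g f : Fin (m + 2) → A)
        (fun j => if j < r then j else j + 1) = 0 := by
  obtain ⟨c, hc⟩ : ∃ c : Fin (m + 1) → A, ∀ r,
      genWronskian d f (Function.update id m r) = ∑ i, c i * d^[r] (f i) := by
    refine ⟨fun i => (wronskianMatrix d f id).adjugate (Fin.last m) i, fun r => ?_⟩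
    have replaced_column := wronskianMatrix_updateCol d f id (Fin.last m) r
    rw [Fin.val_last] at replaced_column
    rw [genWronskian, ← replaced_column, ← Matrix.cramer_apply, Matrix.cramer_eq_adjugate_mulVec]
    rfl
  let Z : Matrix (Fin (m + 3)) (Fin (m + 3)) A := Matrix.of fun i r =>
    (Fin.cons (∑ l, c l * d^[r] (f l)) (fun l => d^[r] ((Fin.cons g f : Fin (m + 2) → A) l)) :
      Fin (m + 3) → A) i
  have first_row : Z 0 = ∑ i, (Fin.cons 0 (Fin.cons 0 c) : Fin (m + 3) → A) i • Z i := by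
    ext r
    simp [Z, Fin.sum_univ_succ (n := m + 2), Fin.sum_univ_succ (n := m + 1)]
  have hZ : Z.det = 0 := by
    rw [← Z.updateRow_eq_self 0, first_row, Matrix.det_updateRow_sum, Fin.cons_zero, zero_smul]
  rw [Matrix.det_succ_row_zero] at hZ
  rw [← hZ]
  refine sum_congr rfl fun r _ => ?_
  rw [hc, genWronskian]
  refine congrArg₂ _ rfl (congrArg Matrix.det ?_)
  ext i j
  simp only [wronskianMatrix, Z, Matrix.of_apply, Matrix.submatrix_apply, Fin.cons_succ,
    Fin.succAbove, Fin.lt_def, Fin.val_castSucc]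
  split_ifs <;> simp

theorem wronskian_mul_genWronskian_cons_add (g : A) (f : Fin (m + 1) → A) :
    genWronskian d f id * genWronskian d (Fin.cons g f : Fin (m + 2) → A)
        (Function.update (Function.update id (m + 1) (m + 2)) m (m + 1)) +
      genWronskian d f (Function.update id m (m + 2)) *
        genWronskian d (Fin.cons g f : Fin (m + 2) → A) id =
    d (genWronskian d f id) * d (genWronskian d (Fin.cons g f : Fin (m + 2) → A) id) := by
  have expansion := sum_neg_one_pow_mul_genWronskian_mul_genWronskian_cons d g f
  rw [Fin.sum_univ_castSucc, Fin.sum_univ_castSucc, Fin.sum_univ_castSucc,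
    sum_eq_zero fun r _ => ?repeated_column] at expansion
  case repeated_column =>
    have hr := r.isLt
    have zero := genWronskian_update_eq_zero d f id (j := m) (l := r) (by omega) (by omega)
      (by omega)
    rw [id_eq] at zero
    simp [zero]
  have update_self : Function.update id m m = (id : ℕ → ℕ) := Function.update_eq_self m id
  have sign_sq : ((-1 : A) ^ m) * (-1) ^ m = 1 := by rw [← mul_pow]; simp
  simp only [Fin.val_castSucc, Fin.val_last, genWronskian_skip, genWronskian_skip_add_one,
    genWronskian_skip_add_two, ← derivation_wronskian, update_self] at expansion
  generalize genWronskian d (Fin.cons g f : Fin (m + 2) → A)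
    (Function.update (Function.update id (m + 1) (m + 2)) m (m + 1)) = Y₁ at expansion ⊢
  generalize genWronskian d f id = W, genWronskian d f (Function.update id m (m + 2)) = W₂,
    genWronskian d (Fin.cons g f : Fin (m + 2) → A) id = Y at expansion ⊢
  linear_combination (-1) ^ m * expansion - (W * Y₁ - d W * d Y + W₂ * Y) * sign_sq

variable {d} {p q : A}

theorem sum_det_updateCol_secondOrderOp (hp : d (d (d p)) = 0) (hq : d (d q) = 0)
    (f : Fin (m + 1) → A) :
    ∑ j, ((wronskianMatrix d f id).updateCol j
      fun i => wronskianMatrix d (fun i => secondOrderOp d p q (f i)) id i j).det =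
    p * (2 * genWronskian d f (Function.update id m (m + 2)) - d (d (genWronskian d f id))) +
      (m * d p + q) * d (genWronskian d f id) +
      (∑ j ∈ range (m + 1), (j.choose 2 * d (d p) + j * d q)) * genWronskian d f id := by
  have column (j : Fin (m + 1)) : ((wronskianMatrix d f id).updateCol j
      fun i => wronskianMatrix d (fun i => secondOrderOp d p q (f i)) id i j).det =
      p * genWronskian d f (Function.update id j (j + 2)) +
        ((j : ℕ) * d p + q) * genWronskian d f (Function.update id j (j + 1)) +
        ((j : ℕ).choose 2 * d (d p) + (j : ℕ) * d q) * genWronskian d f id := by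
    have entries : (fun i => wronskianMatrix d (fun i => secondOrderOp d p q (f i)) id i j) =
        p • (fun i => d^[j + 2] (f i)) + ((j : ℕ) * d p + q) • (fun i => d^[j + 1] (f i)) +
          ((j : ℕ).choose 2 * d (d p) + (j : ℕ) * d q) • (fun i => d^[j] (f i)) := by
      ext i
      exact iterate_secondOrderOp d hp hq (f i) j
    have update_self : Function.update id (j : ℕ) (j : ℕ) = (id : ℕ → ℕ) :=
      Function.update_eq_self _ id
    simp only [entries, Matrix.det_updateCol_add, Matrix.det_updateCol_smul,
      wronskianMatrix_updateCol, update_self, genWronskian]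
  simp only [column]
  rw [Fin.sum_univ_eq_sum_range fun j => p * genWronskian d f (Function.update id j (j + 2)) +
      (j * d p + q) * genWronskian d f (Function.update id j (j + 1)) +
      (j.choose 2 * d (d p) + j * d q) * genWronskian d f id,
    sum_add_distrib, sum_add_distrib, ← mul_sum, ← sum_mul, sum_genWronskian_update_add_two,
    sum_mul_genWronskian_update_succ d f fun j => j * d p + q, ← derivation_wronskian]

theorem wronskian_trace_identity (hp : d (d (d p)) = 0) (hq : d (d q) = 0)
    (f : Fin (m + 1) → A) (B : Matrix (Fin (m + 1)) (Fin (m + 1)) R)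
    (hf : ∀ i, secondOrderOp d p q (f i) = ∑ j, B i j • f j) :
    p * (2 * genWronskian d f (Function.update id m (m + 2)) - d (d (genWronskian d f id))) +
      (m * d p + q) * d (genWronskian d f id) +
      (∑ j ∈ range (m + 1), (j.choose 2 * d (d p) + j * d q)) * genWronskian d f id =
    algebraMap R A B.trace * genWronskian d f id := by
  have rows : wronskianMatrix d (fun i => secondOrderOp d p q (f i)) id =
      B.map (algebraMap R A) * wronskianMatrix d f id := by
    ext i j
    simp only [wronskianMatrix, Matrix.of_apply, id_eq, Matrix.mul_apply, Matrix.map_apply, hf,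
      derivation_iterate_sum_smul, ← Algebra.smul_def]
  rw [← sum_det_updateCol_secondOrderOp hp hq f, ← sum_det_updateRow_eq_sum_det_updateCol, rows,
    sum_det_updateRow_mul, ← AddMonoidHom.map_trace]
  rfl

/- The trace of the operator on the span of `f` occurs in the trace identities of both `f` and
`(g, f)`, and cancels; the Plücker relation removes the generalized Wronskians. -/
theorem wronskian_cons_differential_equation (hp : d (d (d p)) = 0) (hq : d (d q) = 0)
    {f : Fin k → A} (hf : ∀ i, secondOrderOp d p q (f i) ∈ Submodule.span R (Set.range f))
    {g : A} {c : R} (hg : secondOrderOp d p q g - c • g ∈ Submodule.span R (Set.range f))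
    {W Y : A} (hW : W = genWronskian d f id)
    (hY : Y = genWronskian d (Fin.cons g f : Fin (k + 1) → A) id) :
    p * (d (d Y) * W - 2 * d W * d Y + d (d W) * Y) + (k * d p + q) * d Y * W -
        ((k - 1) * d p + q) * d W * Y + (k.choose 2 * d (d p) + k * d q) * Y * W =
      algebraMap R A c * Y * W := by
  subst hW hY
  cases k with
  | zero =>
    rw [Set.range_eq_empty, Submodule.span_empty, Submodule.mem_bot, sub_eq_zero,
      secondOrderOp_apply, Algebra.smul_def] at hg
    simp [genWronskian, wronskianMatrix, ← hg]
  | succ m =>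
    simp only [Submodule.mem_span_range_iff_exists_fun] at hf hg
    choose B hB using hf
    obtain ⟨b, hb⟩ := hg
    have trace_f := wronskian_trace_identity hp hq f (Matrix.of B) fun i => (hB i).symm
    have trace_cons := wronskian_trace_identity hp hq (Fin.cons g f : Fin (m + 2) → A)
      (Matrix.of (Fin.cons (Fin.cons c b) fun i => Fin.cons 0 (B i))) fun i => by
        cases i using Fin.cases with
        | zero => simp [Fin.sum_univ_succ (n := m + 1), hb]
        | succ i => simp [Fin.sum_univ_succ (n := m + 1), hB]
    have trace_eq : (Matrix.of (Fin.cons (Fin.cons c b) fun i => Fin.cons 0 (B i)) :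
        Matrix (Fin (m + 2)) (Fin (m + 2)) R).trace = c + (Matrix.of B).trace := by
      simp [Matrix.trace, Fin.sum_univ_succ (n := m + 1)]
    rw [trace_eq, map_add, sum_range_succ] at trace_cons
    have second := derivation_derivation_wronskian d (Fin.cons g f : Fin (m + 2) → A)
    have plucker := wronskian_mul_genWronskian_cons_add d g f
    push_cast at trace_cons ⊢
    linear_combination genWronskian d f id * trace_cons -
      genWronskian d (Fin.cons g f : Fin (m + 2) → A) id * trace_f + 2 * p * plucker +
      2 * p * genWronskian d f id * second

end Wronskian

section Pochhammer

theorem poch_succ (z : ℝ) (j : ℕ) : poch z (j + 1) = poch z j * (z + j) :=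
  prod_range_succ _ _

theorem poch_neg_natCast_eq_zero {u j : ℕ} (h : u < j) : poch (-u) j = 0 :=
  prod_eq_zero (mem_range.2 h) (neg_add_cancel _)

theorem poch_ne_zero_of_le {z : ℝ} {j u : ℕ} (hju : j ≤ u) (h : poch z u ≠ 0) : poch z j ≠ 0 :=
  prod_ne_zero_iff.2 fun i hi => prod_ne_zero_iff.1 h i (range_mono hju hi)

theorem poch_intCast_add_one_ne_zero {α : ℤ} {j : ℕ} (h : (j : ℤ) ≤ -α - 1) :
    poch ((α : ℝ) + 1) j ≠ 0 :=
  prod_ne_zero_iff.2 fun i hi => by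
    have hi := mem_range.1 hi
    have : α + 1 + (i : ℤ) ≠ 0 := by omega
    exact_mod_cast this

theorem differentiable_poch (j : ℕ) : Differentiable ℝ fun z => poch z j := by
  unfold poch
  fun_prop

theorem genBinom_succ (z : ℝ) (k : ℕ) :
    genBinom z (k + 1) * (k + 1) = genBinom z k * (z - k) := by
  unfold genBinom
  rw [prod_range_succ, Nat.factorial_succ]
  push_cast
  field_simp

theorem genBinom_natCast_add (a : ℝ) (u : ℕ) :
    genBinom (u + a) u = poch (a + 1) u / u.factorial := by
  rw [genBinom, poch, ← prod_range_reflect]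
  congr 1
  refine prod_congr rfl fun i hi => ?_
  have hi : i + 1 ≤ u := mem_range.1 hi
  rw [Nat.sub_sub, add_comm 1 i, Nat.cast_sub hi]
  push_cast
  ring

end Pochhammer

open Polynomial

section JacobiOperator

/-- The Jacobi operator `y ↦ (1 - x²) y'' + (b - a - (a + b + 2) x) y'`. -/
noncomputable def jacobiOp (a b : ℝ) : ℝ[X] →ₗ[ℝ] ℝ[X] :=
  secondOrderOp derivative' (1 - X ^ 2) (C (b - a) - C (a + b + 2) * X)

/-- The Jacobi operator in the variable `z = (1 - x) / 2`, which is the hypergeometric operator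
`y ↦ z (1 - z) y'' + (a + 1 - (a + b + 2) z) y'`. -/
noncomputable def jacobiOpZ (a b : ℝ) : ℝ[X] →ₗ[ℝ] ℝ[X] :=
  secondOrderOp derivative' (X * (1 - X)) (C (a + 1) - C (a + b + 2) * X)

variable (a b : ℝ)

theorem jacobiOpZ_apply (p : ℝ[X]) :
    jacobiOpZ a b p = X * (1 - X) * derivative (derivative p) +
      (C (a + 1) - C (a + b + 2) * X) * derivative p := rfl

theorem jacobiOp_comp (p : ℝ[X]) :
    jacobiOp a b (p.comp (C (1 / 2) * (1 - X))) =
      (jacobiOpZ a b p).comp (C (1 / 2) * (1 - X)) := by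
  have two_mul_half : (2 : ℝ[X]) * C (1 / 2) = 1 := by
    rw [← map_ofNat C 2, ← C_mul]
    norm_num
  simp only [jacobiOp, secondOrderOp_apply, derivative'_apply, jacobiOpZ_apply, derivative_comp,
    derivative_mul, derivative_C, derivative_one, derivative_X, derivative_zero,
    add_comp, mul_comp, sub_comp, X_comp, one_comp, C_comp, ofNat_comp, map_sub, map_add,
    map_one, map_ofNat]
  linear_combination ((C a + 1) * (derivative p).comp (C (1 / 2) * (1 - X)) +
    (1 - X) * C (1 / 2) * (derivative (derivative p)).comp (C (1 / 2) * (1 - X))) * two_mul_half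

theorem coeff_jacobiOpZ (p : ℝ[X]) (j : ℕ) :
    (jacobiOpZ a b p).coeff j =
      (j + 1) * (j + a + 1) * p.coeff (j + 1) - j * (j + a + b + 1) * p.coeff j := by
  have expanded : jacobiOpZ a b p = X * derivative (derivative p) -
      X * (X * derivative (derivative p)) + C (a + 1) * derivative p -
      C (a + b + 2) * (X * derivative p) := by
    rw [jacobiOpZ_apply]
    ring
  rw [expanded]
  rcases j with _ | _ | j <;>
  · simp only [coeff_add, coeff_sub, coeff_C_mul, coeff_X_mul, coeff_X_mul_zero, coeff_derivative]
    push_cast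
    ring

theorem jacobiOpZ_neg_X_pow_mul_one_sub_X_pow (i j : ℕ) :
    jacobiOpZ a b ((-X) ^ i * (1 - X) ^ j) =
      -(C (i * (i + a)) * ((-X) ^ (i - 1) * (1 - X) ^ (j + 1))) -
        C (j * (j + b)) * ((-X) ^ (i + 1) * (1 - X) ^ (j - 1)) -
        C (2 * i * j + (a + 1) * j + (b + 1) * i) * ((-X) ^ i * (1 - X) ^ j) := by
  rw [jacobiOpZ_apply]
  simp only [derivative_mul, derivative_sub, derivative_neg, derivative_pow, derivative_X,
    derivative_one, derivative_natCast, map_add, map_mul, map_one, map_natCast, map_ofNat]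
  rcases i with _ | _ | i <;> rcases j with _ | _ | j <;>
  · simp only [Nat.cast_add, Nat.cast_zero, Nat.cast_one, Nat.zero_sub, Nat.add_sub_cancel,
      derivative_zero]
    ring

theorem jacobiOpZ_X_pow_mul (m : ℕ) (p : ℝ[X]) :
    jacobiOpZ (-m) b (X ^ m * p) = X ^ m * (jacobiOpZ m b p - C (m * (b + 1)) * p) := by
  simp only [jacobiOpZ_apply]
  simp only [derivative_mul, derivative_X_pow, derivative_natCast, map_neg, map_add, map_mul,
    map_one, map_natCast, map_ofNat]
  rcases m with _ | _ | m <;>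
  · simp only [Nat.cast_add, Nat.cast_zero, Nat.cast_one, Nat.zero_sub, Nat.add_sub_cancel]
    ring

end JacobiOperator

section JacobiPolynomial

variable (a b : ℝ) (n : ℕ)

/-- The coefficient of `((x - 1) / 2) ^ (n - j) * ((x + 1) / 2) ^ j` in `P_n^{a,b}`. -/
noncomputable def jacobiWeight (j : ℕ) : ℝ := genBinom (n + a) j * genBinom (n + b) (n - j)

/-- The Jacobi polynomial `P_n^{a,b}` in the variable `z = (1 - x) / 2`. -/
noncomputable def jacobiPolyZ : ℝ[X] :=
  ∑ j ∈ range (n + 1), C (jacobiWeight a b n j) * ((-X) ^ (n - j) * (1 - X) ^ j)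

theorem eval_jacobiPolyZ (x : ℝ) : (jacobiPolyZ a b n).eval ((1 - x) / 2) = jacobiP a b n x := by
  rw [jacobiP, jacobiPolyZ, eval_finsetSum, mul_sum]
  refine sum_congr rfl fun j hj => ?_
  have hj : j ≤ n := Nat.lt_succ_iff.1 (mem_range.1 hj)
  have pow_split : (2 : ℝ)⁻¹ ^ n = 2⁻¹ ^ (n - j) * 2⁻¹ ^ j := by
    rw [← pow_add, Nat.sub_add_cancel hj]
  simp only [eval_mul, eval_C, eval_pow, eval_neg, eval_X, eval_sub, eval_one, jacobiWeight]
  rw [pow_split, show -((1 - x) / 2) = 2⁻¹ * (x - 1) by ring,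
    show 1 - (1 - x) / 2 = 2⁻¹ * (x + 1) by ring, mul_pow, mul_pow]
  ring

theorem natDegree_jacobiPolyZ_le : (jacobiPolyZ a b n).natDegree ≤ n := by
  refine natDegree_sum_le_of_forall_le _ _ fun j hj => ?_
  have hj := mem_range.1 hj
  compute_degree
  omega

theorem coeff_zero_jacobiPolyZ : (jacobiPolyZ a b n).coeff 0 = genBinom (n + a) n := by
  rw [coeff_zero_eq_eval_zero, jacobiPolyZ, eval_finsetSum, sum_range_succ, sum_eq_zero]
  · simp [jacobiWeight, genBinom]
  · intro j hj
    have hj : n - j ≠ 0 := by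
      have := mem_range.1 hj
      omega
    simp [hj]

variable {n} in
theorem jacobiWeight_mul_eq_jacobiWeight_succ_mul {j : ℕ} (hj : j < n) :
    jacobiWeight a b n j * ((n - j : ℕ) * ((n - j : ℕ) + a)) =
      jacobiWeight a b n (j + 1) * ((j + 1 : ℕ) * ((j + 1 : ℕ) + b)) := by
  obtain ⟨k, rfl⟩ := Nat.exists_eq_add_of_lt hj
  have left := genBinom_succ ((j + k + 1 : ℕ) + a) j
  have right := genBinom_succ ((j + k + 1 : ℕ) + b) k
  simp only [jacobiWeight, show j + k + 1 - j = k + 1 by omega,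
    show j + k + 1 - (j + 1) = k by omega]
  push_cast at left right ⊢
  linear_combination genBinom (j + k + 1 + a) j * (k + 1 + a) * right -
    genBinom (j + k + 1 + b) k * (j + 1 + b) * left

theorem sum_jacobiWeight_shift_up :
    ∑ j ∈ range (n + 1), C (jacobiWeight a b n j * ((n - j : ℕ) * ((n - j : ℕ) + a))) *
        ((-X) ^ (n - j - 1) * (1 - X) ^ (j + 1)) =
      ∑ j ∈ range (n + 1), C (jacobiWeight a b n j * (j * (j + b))) *
        ((-X) ^ (n - j) * (1 - X) ^ j) := by
  rw [sum_range_succ, sum_range_succ']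
  congr 1
  · refine sum_congr rfl fun j hj => ?_
    rw [jacobiWeight_mul_eq_jacobiWeight_succ_mul a b (mem_range.1 hj), Nat.sub_sub]
  · simp

theorem sum_jacobiWeight_shift_down :
    ∑ j ∈ range (n + 1), C (jacobiWeight a b n j * (j * (j + b))) *
        ((-X) ^ (n - j + 1) * (1 - X) ^ (j - 1)) =
      ∑ j ∈ range (n + 1), C (jacobiWeight a b n j * ((n - j : ℕ) * ((n - j : ℕ) + a))) *
        ((-X) ^ (n - j) * (1 - X) ^ j) := by
  rw [sum_range_succ', sum_range_succ]
  congr 1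
  · refine sum_congr rfl fun j hj => ?_
    have hj := mem_range.1 hj
    rw [jacobiWeight_mul_eq_jacobiWeight_succ_mul a b hj, show n - (j + 1) + 1 = n - j by omega,
      Nat.add_sub_cancel]
  · simp

theorem jacobiOpZ_jacobiPolyZ :
    jacobiOpZ a b (jacobiPolyZ a b n) = -lam a b n • jacobiPolyZ a b n := by
  have termwise : jacobiOpZ a b (jacobiPolyZ a b n) =
      -∑ j ∈ range (n + 1), C (jacobiWeight a b n j * ((n - j : ℕ) * ((n - j : ℕ) + a))) *
          ((-X) ^ (n - j - 1) * (1 - X) ^ (j + 1)) -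
        ∑ j ∈ range (n + 1), C (jacobiWeight a b n j * (j * (j + b))) *
          ((-X) ^ (n - j + 1) * (1 - X) ^ (j - 1)) -
        ∑ j ∈ range (n + 1), C (jacobiWeight a b n j *
          (2 * (n - j : ℕ) * j + (a + 1) * j + (b + 1) * (n - j : ℕ))) *
            ((-X) ^ (n - j) * (1 - X) ^ j) := by
    simp only [jacobiPolyZ, map_sum, ← smul_eq_C_mul, map_smul,
      jacobiOpZ_neg_X_pow_mul_one_sub_X_pow, ← sum_neg_distrib, ← sum_sub_distrib]
    refine sum_congr rfl fun j _ => ?_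
    simp only [smul_eq_C_mul, C_mul]
    ring
  rw [termwise, sum_jacobiWeight_shift_up, sum_jacobiWeight_shift_down, jacobiPolyZ,
    ← sum_neg_distrib, ← sum_sub_distrib, ← sum_sub_distrib, smul_sum]
  refine sum_congr rfl fun j hj => ?_
  have hj : j ≤ n := Nat.lt_succ_iff.1 (mem_range.1 hj)
  rw [smul_eq_C_mul, ← mul_assoc (C (-lam a b n)), ← C_mul, ← neg_mul, ← C_neg, ← sub_mul, ← C_sub,
    ← sub_mul, ← C_sub, Nat.cast_sub hj, lam]
  congr 2
  ring

end JacobiPolynomial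

section Hypergeometric

variable (a b : ℝ) (u : ℕ)

/-- The coefficient of `z ^ j` in `₂F₁(-u, u - s + a + b + 1; a - s + 1; z)`. -/
noncomputable def hypCoeff (j : ℕ) (s : ℝ) : ℝ :=
  poch (-u) j * poch (u - s + a + b + 1) j / (poch (a - s + 1) j * j.factorial)

/-- The terminating series `₂F₁(-u, u + a + b + 1; a + 1; z)`. -/
noncomputable def hypPoly : ℝ[X] :=
  ∑ j ∈ range (u + 1), C (hypCoeff a b u j 0) * X ^ j

/-- The derivative at `s = 0` of `₂F₁(-u, u - s + a + b + 1; a - s + 1; z)`. -/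
noncomputable def hypDerivPoly : ℝ[X] :=
  ∑ j ∈ range (u + 1), C (deriv (hypCoeff a b u j) 0) * X ^ j

variable {u} in
theorem hypCoeff_eq_zero {j : ℕ} (h : u < j) : hypCoeff a b u j = 0 := by
  ext s
  simp [hypCoeff, poch_neg_natCast_eq_zero h]

theorem coeff_hypPoly (j : ℕ) : (hypPoly a b u).coeff j = hypCoeff a b u j 0 := by
  simp only [hypPoly, finsetSum_coeff, coeff_C_mul, coeff_X_pow, mul_ite, mul_one, mul_zero,
    sum_ite_eq, mem_range, Nat.lt_succ_iff]
  split_ifs with hj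
  · rfl
  · simp [hypCoeff_eq_zero a b (not_le.1 hj)]

theorem coeff_hypDerivPoly (j : ℕ) :
    (hypDerivPoly a b u).coeff j = deriv (hypCoeff a b u j) 0 := by
  simp only [hypDerivPoly, finsetSum_coeff, coeff_C_mul, coeff_X_pow, mul_ite, mul_one, mul_zero,
    sum_ite_eq, mem_range, Nat.lt_succ_iff]
  split_ifs with hj
  · rfl
  · simp [hypCoeff_eq_zero a b (not_le.1 hj)]

variable {a} in
theorem hypCoeff_succ {j : ℕ} {s : ℝ} (h : poch (a - s + 1) (j + 1) ≠ 0) :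
    (j + 1) * (j + a - s + 1) * hypCoeff a b u (j + 1) s =
      (j - u) * (j + u - s + a + b + 1) * hypCoeff a b u j s := by
  rw [poch_succ] at h
  have poch_ne := left_ne_zero_of_mul h
  have factor_ne := right_ne_zero_of_mul h
  simp only [hypCoeff, poch_succ, Nat.factorial_succ]
  push_cast
  field_simp
  ring

variable {a} in
theorem differentiableAt_hypCoeff {j : ℕ} (h : poch (a + 1) j ≠ 0) :
    DifferentiableAt ℝ (hypCoeff a b u j) 0 := by
  have numerator : Differentiable ℝ fun s => poch (u - s + a + b + 1) j :=
    (differentiable_poch j).comp (by fun_prop : Differentiable ℝ fun s => u - s + a + b + 1)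
  have denominator : Differentiable ℝ fun s => poch (a - s + 1) j :=
    (differentiable_poch j).comp (by fun_prop : Differentiable ℝ fun s => a - s + 1)
  refine ((numerator 0).const_mul _).div ((denominator 0).mul_const _) (mul_ne_zero ?_ ?_)
  · simpa using h
  · positivity

variable {a u} in
theorem deriv_hypCoeff_succ (h : poch (a + 1) u ≠ 0) (j : ℕ) :
    (j + 1) * ((j + a + 1) * deriv (hypCoeff a b u (j + 1)) 0 - hypCoeff a b u (j + 1) 0) =
      (j - u) * ((j + u + a + b + 1) * deriv (hypCoeff a b u j) 0 - hypCoeff a b u j 0) := by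
  rcases lt_trichotomy j u with hj | rfl | hj
  · have poch_ne : poch (a + 1) (j + 1) ≠ 0 := poch_ne_zero_of_le hj h
    have recurrence : (fun s : ℝ => (j + 1) * (j + a - s + 1) * hypCoeff a b u (j + 1) s) =ᶠ[nhds 0]
        fun s => (j - u) * (j + u - s + a + b + 1) * hypCoeff a b u j s := by
      have continuous : ContinuousAt (fun s => poch (a - s + 1) (j + 1)) 0 :=
        ((differentiable_poch (j + 1)).continuous.comp
          (by fun_prop : Continuous fun s => a - s + 1)).continuousAt
      filter_upwards [continuous.eventually_ne (by simpa using poch_ne)] with s hs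
      exact hypCoeff_succ b u hs
    have left_factor : HasDerivAt (fun s : ℝ => (j + 1) * (j + a - s + 1)) (-(j + 1)) 0 := by
      simpa using (((hasDerivAt_id (0 : ℝ)).const_sub (j + a)).add_const 1).const_mul (j + 1 : ℝ)
    have right_factor :
        HasDerivAt (fun s : ℝ => (j - u) * (j + u - s + a + b + 1)) (-(j - u)) 0 := by
      simpa using ((((hasDerivAt_id (0 : ℝ)).const_sub (j + u : ℝ)).add_const a).add_const
        b).add_const 1 |>.const_mul (j - u : ℝ)
    have left := left_factor.mul (differentiableAt_hypCoeff b u poch_ne).hasDerivAt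
    have right := right_factor.mul
      (differentiableAt_hypCoeff b u (poch_ne_zero_of_le hj.le h)).hasDerivAt
    linear_combination left.deriv.symm.trans (recurrence.deriv_eq.trans right.deriv)
  · simp [hypCoeff_eq_zero a b (Nat.lt_succ_self j)]
  · simp [hypCoeff_eq_zero a b hj, hypCoeff_eq_zero a b (hj.trans (Nat.lt_succ_self j))]

/- The hypergeometric equation with parameters depending on `s`, differentiated at `s = 0`. -/
variable {a u} in
theorem jacobiOpZ_hypDerivPoly (h : poch (a + 1) u ≠ 0) :
    jacobiOpZ a b (hypDerivPoly a b u) = -lam a b u • hypDerivPoly a b u +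
      (u : ℝ) • hypPoly a b u + (1 - X) * derivative (hypPoly a b u) := by
  ext j
  have coeff_X_mul_derivative :
      (X * derivative (hypPoly a b u)).coeff j = j * hypCoeff a b u j 0 := by
    cases j with
    | zero => simp
    | succ j => rw [coeff_X_mul, coeff_derivative, coeff_hypPoly, mul_comm]; push_cast; rfl
  simp only [sub_mul, one_mul, coeff_add, coeff_sub, coeff_smul, smul_eq_mul, coeff_jacobiOpZ,
    coeff_hypDerivPoly, coeff_hypPoly, coeff_derivative, coeff_X_mul_derivative, lam]
  linear_combination deriv_hypCoeff_succ b h j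

variable {a b} in
theorem hypPoly_eq_hypPoly {n u : ℕ} (hnu : n + u + a + b + 1 = 0) :
    hypPoly a b n = hypPoly a b u := by
  ext j
  rw [coeff_hypPoly, coeff_hypPoly, hypCoeff, hypCoeff,
    show (n : ℝ) - 0 + a + b + 1 = -u by linear_combination hnu,
    show (u : ℝ) - 0 + a + b + 1 = -n by linear_combination hnu, mul_comm (poch (-n) j)]

variable {a b} in
theorem jacobiOpZ_hypDerivPoly_sub {n u : ℕ} (hn : poch (a + 1) n ≠ 0) (hu : poch (a + 1) u ≠ 0)
    (hnu : n + u + a + b + 1 = 0) :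
    jacobiOpZ a b (hypDerivPoly a b n - hypDerivPoly a b u) =
      -lam a b n • (hypDerivPoly a b n - hypDerivPoly a b u) + (n - u : ℝ) • hypPoly a b u := by
  have lam_eq : lam a b u = lam a b n := by
    unfold lam
    linear_combination (u - n : ℝ) * hnu
  rw [map_sub, jacobiOpZ_hypDerivPoly b hn, jacobiOpZ_hypDerivPoly b hu, hypPoly_eq_hypPoly hnu,
    lam_eq]
  module

variable {a b u} in
theorem eq_coeff_zero_smul_hypPoly (h : poch (a + 1) u ≠ 0) {p : ℝ[X]} (hdeg : p.natDegree ≤ u)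
    (hp : jacobiOpZ a b p = -lam a b u • p) : p = p.coeff 0 • hypPoly a b u := by
  ext j
  rw [coeff_smul, coeff_hypPoly, smul_eq_mul]
  rcases le_or_gt j u with hj | hj
  · induction j with
    | zero => simp [hypCoeff, poch]
    | succ j ih =>
      have poch_ne := poch_ne_zero_of_le hj h
      have recurrence := hypCoeff_succ b u (s := 0) (by simpa using poch_ne)
      have factor_ne : ((j : ℝ) + 1) * (a + 1 + j) ≠ 0 :=
        mul_ne_zero (by positivity) (right_ne_zero_of_mul (poch_succ (a + 1) j ▸ poch_ne))
      have coeff_eq := congrArg (coeff · j) hp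
      simp only [coeff_jacobiOpZ, coeff_smul, smul_eq_mul, ih (by omega), lam] at coeff_eq
      refine mul_left_cancel₀ factor_ne ?_
      linear_combination coeff_eq - p.coeff 0 * recurrence
  · rw [coeff_eq_zero_of_natDegree_lt (hdeg.trans_lt hj), hypCoeff_eq_zero a b hj, Pi.zero_apply,
      mul_zero]

variable {a u} in
theorem jacobiPolyZ_eq_smul_hypPoly (h : poch (a + 1) u ≠ 0) :
    jacobiPolyZ a b u = (poch (a + 1) u / u.factorial) • hypPoly a b u := by
  rw [← genBinom_natCast_add, ← coeff_zero_jacobiPolyZ a b]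
  exact eq_coeff_zero_smul_hypPoly h (natDegree_jacobiPolyZ_le a b u) (jacobiOpZ_jacobiPolyZ a b u)

end Hypergeometric

section ModifiedJacobi

variable (α β : ℤ) (M : ℕ → ℝ) (n u : ℕ)

/-- The normalizing constant of `φ_u^{α,β}`. -/
noncomputable def phiScale : ℝ :=
  poch (α + 1) (max u (-α - β - u - 1).toNat) /
    (max u.factorial (-α - β - u - 1).toNat.factorial : ℕ)

/-- The polynomial `P̂_n^{α,β;M}` in the variable `z = (1 - x) / 2`. The constants of `φ_n` and
`φ_{-α-β-n-1}` agree when both indices are natural numbers, hence the common factor. -/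
noncomputable def phatPolyZ : ℝ[X] :=
  if -α - β ≤ 2 * (n : ℤ) ∧ (n : ℤ) ≤ -α - 1 then
    phiScale α β n • (hypDerivPoly α β n - hypDerivPoly α β (-α - β - n - 1).toNat)
  else if -α ≤ (n : ℤ) ∧ (n : ℤ) ≤ -α - β - 1 then
    ((-1 : ℝ) ^ (β + n) * ((n + α).toNat.factorial * (n + β).toNat.factorial *
        (-α - β - n - 1).toNat.factorial) / n.factorial) •
      ((M (α + n).toNat - 1)⁻¹ • jacobiPolyZ α β (-α - β - n - 1).toNat +
        X ^ (-α).toNat * jacobiPolyZ (-α) β (α + n).toNat)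
  else jacobiPolyZ α β n

variable {α β} in
theorem deriv_phiJ (hu : (u : ℤ) ≤ -α - 1) (x : ℝ) :
    deriv (fun s => phiJ α β u s x) 0 =
      phiScale α β u * (hypDerivPoly α β u).eval ((1 - x) / 2) := by
  have phiJ_eq : (fun s => phiJ α β u s x) = fun s => phiScale α β u *
      ∑ j ∈ range (u + 1), hypCoeff α β u j s * ((1 - x) / 2) ^ j := rfl
  rw [phiJ_eq, hypDerivPoly, eval_finsetSum]
  simp only [eval_mul, eval_C, eval_pow, eval_X]
  refine (HasDerivAt.const_mul _ (HasDerivAt.fun_sum fun j hj => ?_)).deriv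
  have hj : (j : ℤ) ≤ -α - 1 := by
    have := mem_range.1 hj
    omega
  exact (differentiableAt_hypCoeff _ _ (poch_intCast_add_one_ne_zero hj)).hasDerivAt.mul_const _

theorem phiScale_eq_phiScale {α β : ℤ} {n u : ℕ} (hnu : (n : ℤ) + u + α + β + 1 = 0) :
    phiScale α β u = phiScale α β n := by
  rw [phiScale, phiScale, show (-α - β - (u : ℤ) - 1).toNat = n by omega,
    show (-α - β - (n : ℤ) - 1).toNat = u by omega, max_comm u, max_comm u.factorial]

theorem ceil_intCast_div_two_le_iff (k n : ℤ) : ⌈(k : ℚ) / 2⌉ ≤ n ↔ k ≤ 2 * n := by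
  rw [Int.ceil_le, div_le_iff₀ two_pos, mul_comm]
  exact_mod_cast Iff.rfl

variable {β} in
theorem eval_phatPolyZ (hβ : β ≤ 0) (x : ℝ) :
    (phatPolyZ α β M n).eval ((1 - x) / 2) = Phat α β M n x := by
  simp only [Phat, phatPolyZ, ceil_intCast_div_two_le_iff]
  split_ifs with hlog hmid
  · obtain ⟨u, hu⟩ : ∃ u : ℕ, -α - β - (n : ℤ) - 1 = u := Int.eq_ofNat_of_zero_le (by omega)
    rw [hu, Int.toNat_natCast, deriv_phiJ n hlog.2, deriv_phiJ u (by omega),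
      phiScale_eq_phiScale (n := n) (u := u) (by omega), eval_smul, eval_sub, smul_eq_mul, mul_sub]
  · simp only [eval_smul, smul_eq_mul, eval_add, eval_mul, eval_pow, eval_X, eval_jacobiPolyZ]
  · exact eval_jacobiPolyZ _ _ _ _

variable {α β n} in
theorem jacobiOpZ_phatPolyZ_of_middle (hmid : -α ≤ (n : ℤ) ∧ (n : ℤ) ≤ -α - β - 1)
    (hα : α ≤ 0) :
    jacobiOpZ α β (phatPolyZ α β M n) = -lam α β n • phatPolyZ α β M n := by
  obtain ⟨m, rfl⟩ : ∃ m : ℕ, α = -m := ⟨(-α).toNat, by omega⟩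
  obtain ⟨k, rfl⟩ : ∃ k : ℕ, n = m + k := ⟨n - m, by omega⟩
  obtain ⟨u, hu⟩ : ∃ u : ℕ, - -(m : ℤ) - β - (m + k : ℕ) - 1 = u :=
    Int.eq_ofNat_of_zero_le (by omega)
  have hβ : (β : ℝ) = -u - k - 1 := by
    have : β = -u - k - 1 := by omega
    exact_mod_cast this
  have eigen := jacobiOpZ_X_pow_mul β m (jacobiPolyZ m β k)
  rw [jacobiOpZ_jacobiPolyZ] at eigen
  rw [phatPolyZ, if_neg (by omega), if_pos hmid, hu, Int.toNat_natCast,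
    show (- -(m : ℤ)).toNat = m by omega, show (-(m : ℤ) + (m + k : ℕ)).toNat = k by omega]
  push_cast
  rw [map_smul, map_add, map_smul, jacobiOpZ_jacobiPolyZ, neg_neg, eigen, lam, lam, lam, hβ,
    ← smul_eq_C_mul, ← sub_smul, mul_smul_comm]
  module

variable {α β n} in
theorem jacobiOpZ_phatPolyZ_of_not_log (hα : α ≤ 0)
    (hn : ¬(-α - β ≤ 2 * (n : ℤ) ∧ (n : ℤ) ≤ -α - 1)) :
    jacobiOpZ α β (phatPolyZ α β M n) = -lam α β n • phatPolyZ α β M n := by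
  by_cases hmid : -α ≤ (n : ℤ) ∧ (n : ℤ) ≤ -α - β - 1
  · exact jacobiOpZ_phatPolyZ_of_middle M hmid hα
  · rw [phatPolyZ, if_neg hn, if_neg hmid]
    exact jacobiOpZ_jacobiPolyZ _ _ _

variable {α β n u} in
theorem jacobiOpZ_phatPolyZ_of_log (hn : -α - β ≤ 2 * (n : ℤ) ∧ (n : ℤ) ≤ -α - 1)
    (hnu : (n : ℤ) + u + α + β + 1 = 0) :
    ∃ c : ℝ, jacobiOpZ α β (phatPolyZ α β M n) =
      -lam α β n • phatPolyZ α β M n + c • phatPolyZ α β M u := by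
  have hn_ne := poch_intCast_add_one_ne_zero hn.2
  have hu_ne : poch ((α : ℝ) + 1) u ≠ 0 := poch_intCast_add_one_ne_zero (by omega)
  have phat_u : phatPolyZ α β M u = (poch ((α : ℝ) + 1) u / u.factorial) • hypPoly α β u := by
    rw [phatPolyZ, if_neg (by omega), if_neg (by omega), jacobiPolyZ_eq_smul_hypPoly _ hu_ne]
  have phat_n : phatPolyZ α β M n =
      phiScale α β n • (hypDerivPoly α β n - hypDerivPoly α β u) := by
    rw [phatPolyZ, if_pos hn, show (-α - β - (n : ℤ) - 1).toNat = u by omega]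
  refine ⟨phiScale α β n * (n - u) / (poch ((α : ℝ) + 1) u / u.factorial), ?_⟩
  rw [phat_n, phat_u, map_smul,
    jacobiOpZ_hypDerivPoly_sub hn_ne hu_ne (by exact_mod_cast hnu), smul_smul (_ / _),
    div_mul_cancel₀ _ (div_ne_zero hu_ne (by positivity))]
  module

/-- The polynomial `P̂_n^{α,β;M}` in the variable `x`. -/
noncomputable def phatPoly : ℝ[X] :=
  (phatPolyZ α β M n).comp (C (1 / 2) * (1 - X))

variable {β} in
theorem eval_phatPoly (hβ : β ≤ 0) (x : ℝ) : (phatPoly α β M n).eval x = Phat α β M n x := by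
  rw [phatPoly, eval_comp, ← eval_phatPolyZ α M n hβ]
  congr 1
  simp only [eval_mul, eval_C, eval_sub, eval_one, eval_X]
  ring

variable {α β} in
theorem jacobiOp_phatPoly_sub_mem_span (hαβ : α ≤ β) (hβ : β ≤ 0) {S : Set ℕ}
    (hS : ∀ k : ℕ, -β ≤ (k : ℤ) → 2 * (k : ℤ) < -α - β - 1 → k ∈ S) :
    jacobiOp α β (phatPoly α β M n) - -lam α β n • phatPoly α β M n ∈
      Submodule.span ℝ (phatPoly α β M '' S) := by
  rw [phatPoly, jacobiOp_comp]
  by_cases hn : -α - β ≤ 2 * (n : ℤ) ∧ (n : ℤ) ≤ -α - 1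
  · obtain ⟨u, hu⟩ : ∃ u : ℕ, -α - β - (n : ℤ) - 1 = u := Int.eq_ofNat_of_zero_le (by omega)
    obtain ⟨c, hc⟩ := jacobiOpZ_phatPolyZ_of_log M hn (u := u) (by omega)
    rw [hc, add_comp, smul_comp, smul_comp, add_sub_cancel_left]
    exact Submodule.smul_mem _ c
      (Submodule.subset_span ⟨u, hS u (by omega) (by omega), rfl⟩)
  · rw [jacobiOpZ_phatPolyZ_of_not_log M (hαβ.trans hβ) hn, smul_comp, sub_self]
    exact Submodule.zero_mem _

end ModifiedJacobi

section ExceptionalJacobi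

theorem iteratedDeriv_eval (p : ℝ[X]) (j : ℕ) :
    iteratedDeriv j (fun x => p.eval x) = fun x => (derivative^[j] p).eval x := by
  induction j with
  | zero => simp
  | succ j ih =>
    ext x
    rw [iteratedDeriv_succ, ih, Function.iterate_succ_apply', Polynomial.deriv]

theorem eval_wronskian {k : ℕ} (f : Fin k → ℝ[X]) (x : ℝ) :
    (genWronskian derivative' f id).eval x =
      (Matrix.of fun i j : Fin k => iteratedDeriv j (fun y => (f i).eval y) x).det := by
  simp only [iteratedDeriv_eval]
  exact RingHom.map_det (evalRingHom x) _

theorem wronskian_cons_jacobi_differential_equation {a b c : ℝ} {k : ℕ} {f : Fin k → ℝ[X]}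
    (hf : ∀ i, jacobiOp a b (f i) ∈ Submodule.span ℝ (Set.range f)) {g : ℝ[X]}
    (hg : jacobiOp a b g - c • g ∈ Submodule.span ℝ (Set.range f)) {w y : ℝ → ℝ}
    (hw : ∀ x, w x = (genWronskian derivative' f id).eval x)
    (hy : ∀ x, y x = (genWronskian derivative' (Fin.cons g f : Fin (k + 1) → ℝ[X]) id).eval x)
    {x : ℝ} (hx : w x ≠ 0) :
    (1 - x ^ 2) * iteratedDeriv 2 y x +
        (b - a - (a + b + 2 * k + 2) * x - 2 * (1 - x ^ 2) * deriv w x / w x) * deriv y x +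
        (-lam a b k + (a - b + (2 * k + a + b) * x) * deriv w x / w x +
          (1 - x ^ 2) * iteratedDeriv 2 w x / w x) * y x =
      c * y x := by
  obtain rfl := funext hw
  obtain rfl := funext hy
  have equation := wronskian_cons_differential_equation (d := derivative' (R := ℝ))
    (p := 1 - X ^ 2) (q := C (b - a) - C (a + b + 2) * X) (by simp) (by simp) hf hg rfl rfl
  replace equation := congrArg (eval x) equation
  simp only [derivative'_apply, derivative_one, derivative_X_pow_succ, Nat.cast_one, map_add,
    map_one, pow_one, zero_sub, mul_neg, map_sub, derivative_neg, derivative_mul, add_zero,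
    zero_mul, derivative_X, mul_one, zero_add, neg_add_rev, derivative_C, sub_self, eval_add,
    eval_sub, eval_mul, eval_one, eval_pow, eval_X, eval_ofNat, eval_neg,
    eval_natCast, eval_C, algebraMap_eq] at equation
  rw [Nat.cast_choose_two] at equation
  simp only [iteratedDeriv_eval, Polynomial.deriv, Function.iterate_succ_apply',
    Function.iterate_zero_apply, lam]
  field_simp
  linear_combination equation

variable {α β : ℤ} (M : ℕ → ℝ) (F : Finset ℕ)

theorem omegaJ_eq_eval_wronskian (hβ : β ≤ 0) (x : ℝ) :
    OmegaJ α β M F x =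
      (genWronskian derivative' (fun i => phatPoly α β M (elemOf F i)) id).eval x := by
  simp only [eval_wronskian, eval_phatPoly _ _ _ hβ]
  rfl

theorem exJacobi_eq_eval_wronskian (hβ : β ≤ 0) (n : ℕ) (x : ℝ) :
    exJacobi α β M F n x = (genWronskian derivative' (Fin.cons (phatPoly α β M (n - uF F))
      fun i => phatPoly α β M (elemOf F i) : Fin (F.card + 1) → ℝ[X]) id).eval x := by
  rw [eval_wronskian, exJacobi]
  congr 2
  ext i j
  cases i using Fin.cases <;> simp [eval_phatPoly _ _ _ hβ]

theorem range_elemOf : Set.range (elemOf F) = F :=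
  F.range_orderEmbOfFin rfl

end ExceptionalJacobi

theorem exceptional_jacobi_differential_equation_general
    (α β : ℤ) (M : ℕ → ℝ) (F : Finset ℕ) (hαβ : α ≤ β) (hβ : β ≤ 0)
    (_hM : ∀ i, M i ≠ 1)
    (hF : ∀ k : ℕ, -β ≤ (k : ℤ) → 2 * (k : ℤ) < -α - β - 1 → k ∈ F)
    (m : ℕ) (x : ℝ) (hx : OmegaJ α β M F x ≠ 0) :
    (1 - x ^ 2) * iteratedDeriv 2 (exJacobi α β M F (m + uF F)) x +
      ((β : ℝ) - (α : ℝ) - ((α : ℝ) + (β : ℝ) + 2 * (F.card : ℝ) + 2) * x -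
          2 * (1 - x ^ 2) * deriv (OmegaJ α β M F) x / OmegaJ α β M F x) *
        deriv (exJacobi α β M F (m + uF F)) x +
      (-lam (α : ℝ) (β : ℝ) (F.card : ℝ) +
          ((α : ℝ) - (β : ℝ) + (2 * (F.card : ℝ) + (α : ℝ) + (β : ℝ)) * x) *
            deriv (OmegaJ α β M F) x / OmegaJ α β M F x +
          (1 - x ^ 2) * iteratedDeriv 2 (OmegaJ α β M F) x / OmegaJ α β M F x) *
        exJacobi α β M F (m + uF F) x =
    -lam (α : ℝ) (β : ℝ) m * exJacobi α β M F (m + uF F) x := by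
  have range_eq : Set.range (fun i => phatPoly α β M (elemOf F i)) = phatPoly α β M '' F := by
    rw [← range_elemOf F, ← Set.range_comp]
    rfl
  have almost_eigen (n : ℕ) := jacobiOp_phatPoly_sub_mem_span M n hαβ hβ (S := F) hF
  rw [← range_eq] at almost_eigen
  have invariant (i : Fin F.card) : jacobiOp α β (phatPoly α β M (elemOf F i)) ∈
      Submodule.span ℝ (Set.range fun i => phatPoly α β M (elemOf F i)) :=
    (Submodule.sub_mem_iff_left _ (Submodule.smul_mem _ _
      (Submodule.subset_span (Set.mem_range_self i)))).1 (almost_eigen (elemOf F i))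
  refine wronskian_cons_jacobi_differential_equation invariant (almost_eigen m)
    (omegaJ_eq_eval_wronskian M F hβ) (fun x => ?_) hx
  rw [exJacobi_eq_eval_wronskian M F hβ, Nat.add_sub_cancel]

/-- second order differential equation for the exceptional Jacobi polynomials. -/
theorem exceptional_jacobi_differential_equation
    (α β : ℤ) (M : ℕ → ℝ) (F : Finset ℕ)
    (hαβ : α ≤ β) (hβ : β ≤ -1)
    (hM : ∀ i, M i ≠ 0 ∧ M i ≠ 1)
    (hFpos : ∀ f ∈ F, 0 < f)
    (hFc : ∀ k : ℕ, -β ≤ (k : ℤ) → (k : ℤ) ≤ -α - β - 1 → k ∈ F)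
    (n : ℕ) (hn : inSigma F n) (x : ℝ) (hx : OmegaJ α β M F x ≠ 0) :
    (1 - x ^ 2) * iteratedDeriv 2 (exJacobi α β M F n) x +
      ((β : ℝ) - (α : ℝ) - ((α : ℝ) + (β : ℝ) + 2 * (F.card : ℝ) + 2) * x -
          2 * (1 - x ^ 2) * deriv (OmegaJ α β M F) x / OmegaJ α β M F x) *
        deriv (exJacobi α β M F n) x +
      (-lam (α : ℝ) (β : ℝ) (F.card : ℝ) +
          ((α : ℝ) - (β : ℝ) + (2 * (F.card : ℝ) + (α : ℝ) + (β : ℝ)) * x) *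
            deriv (OmegaJ α β M F) x / OmegaJ α β M F x +
          (1 - x ^ 2) * iteratedDeriv 2 (OmegaJ α β M F) x / OmegaJ α β M F x) *
        exJacobi α β M F n x =
    -lam (α : ℝ) (β : ℝ) ((n - uF F : ℕ) : ℝ) * exJacobi α β M F n x := by
  obtain ⟨m, rfl⟩ := Nat.exists_eq_add_of_le' hn.1
  rw [Nat.add_sub_cancel]
  exact exceptional_jacobi_differential_equation_general α β M F hαβ (by omega)
    (fun i => (hM i).2) (fun k hk hk' => hFc k hk (by omega)) m x hx
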